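/- Let V be a finite nonempty type, E : Finset (V × V) a directed road network, S a finite set of terminals in V with at least two elements, and R_S the set of all ordered pairs (s, s') of distinct terminals of S. Then for every Q* ⊆ E: Q* is a directed multiway cut for S if and only if f*(E \ Q*, R_S) = 0. (This is the correctness of the reduction from Minimum Multiway Cut used in the NP-completeness proofs of the problem of Maximizing Disruption.) -/

import Mathlib

open scoped ENNReal

/-- A directed walk of length `n` from `s` to `t` using only edges in `A`. -/
def IsDirWalk {V : Type*} (A : Finset (V × V)) (s t : V) (n : ℕ) : Prop :=
  ∃ f : ℕ → V, f 0 = s ∧ f n = t ∧ ∀ i < n, (f i, f (i + 1)) ∈ A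

/-- The directed distance `d_A(s,t)` in `ℝ≥0∞`: the infimum of lengths of
directed walks from `s` to `t` in `A` (`∞` if there is no such walk). -/
noncomputable def dDist {V : Type*} (A : Finset (V × V)) (s t : V) : ℝ≥0∞ :=
  sInf {x : ℝ≥0∞ | ∃ n : ℕ, IsDirWalk A s t n ∧ x = (n : ℝ≥0∞)}

/-- The traffic-quality objective `f*` under the simple traffic model `M∅`. -/
noncomputable def fStar {V : Type*} (A : Finset (V × V)) (R : Finset (V × V)) : ℝ≥0∞ :=
  (R.card : ℝ≥0∞)⁻¹ * ∑ p ∈ R, (dDist A p.1 p.2)⁻¹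

/-- The ride set `R_S`: all ordered pairs of distinct terminals of `S`. -/
def ridesOf {V : Type*} [DecidableEq V] (S : Finset V) : Finset (V × V) :=
  (S ×ˢ S).filter fun p => p.1 ≠ p.2

/-- `F` is a directed multiway cut for the terminal set `S` in the network `E`:
in `E \ F` there is no directed walk between any two distinct terminals. -/
def IsDirMultiwayCut {V : Type*} [DecidableEq V] (E F : Finset (V × V)) (S : Finset V) : Prop :=
  ∀ s ∈ S, ∀ s' ∈ S, s ≠ s' → ∀ n : ℕ, ¬ IsDirWalk (E \ F) s s' n

/-- `F` is a directed multicut for the set `P` of source–destination pairs in `E`: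
in `E \ F` there is no directed walk from `s` to `t` for any `(s,t) ∈ P`. -/
def IsDirMulticut {V : Type*} [DecidableEq V] (E F : Finset (V × V)) (P : Finset (V × V)) : Prop :=
  ∀ p ∈ P, ∀ n : ℕ, ¬ IsDirWalk (E \ F) p.1 p.2 n

section Disruption

variable {V : Type*}

theorem dDist_eq_top_iff {A : Finset (V × V)} {s t : V} :
    dDist A s t = ∞ ↔ ∀ n : ℕ, ¬ IsDirWalk A s t n := by
  rw [dDist, sInf_eq_top]
  constructor
  · intro hlengths n hwalk
    exact ENNReal.natCast_ne_top n (hlengths n ⟨n, hwalk, rfl⟩)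
  · rintro hno _ ⟨n, hwalk, -⟩
    exact absurd hwalk (hno n)

-- For `R = ∅` the objective is `0⁻¹ * 0 = ∞ * 0`, which is `0` in `ℝ≥0∞`.
theorem fStar_eq_zero_iff {A R : Finset (V × V)} :
    fStar A R = 0 ↔ ∀ p ∈ R, dDist A p.1 p.2 = ∞ := by
  have hweight : (R.card : ℝ≥0∞)⁻¹ ≠ 0 := ENNReal.inv_ne_zero.2 (ENNReal.natCast_ne_top _)
  simp only [fStar, mul_eq_zero, hweight, false_or, Finset.sum_eq_zero_iff, ENNReal.inv_eq_zero]

variable [DecidableEq V]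

theorem mem_ridesOf {S : Finset V} {p : V × V} :
    p ∈ ridesOf S ↔ p.1 ∈ S ∧ p.2 ∈ S ∧ p.1 ≠ p.2 := by
  rw [ridesOf, Finset.mem_filter, Finset.mem_product, and_assoc]

theorem isDirMultiwayCut_iff_isDirMulticut_ridesOf {E F : Finset (V × V)} {S : Finset V} :
    IsDirMultiwayCut E F S ↔ IsDirMulticut E F (ridesOf S) := by
  simp only [IsDirMultiwayCut, IsDirMulticut, mem_ridesOf, Prod.forall]
  exact ⟨fun h s t ⟨hs, ht, hst⟩ => h s hs t ht hst,
    fun h s hs t ht hst => h s t ⟨hs, ht, hst⟩⟩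

theorem isDirMulticut_iff_fStar_eq_zero {E F P : Finset (V × V)} :
    IsDirMulticut E F P ↔ fStar (E \ F) P = 0 := by
  simp only [IsDirMulticut, fStar_eq_zero_iff, dDist_eq_top_iff]

theorem stmt_3_general (E : Finset (V × V)) (S : Finset V) (_hS : 2 ≤ S.card)
    (Qstar : Finset (V × V)) :
    IsDirMultiwayCut E Qstar S ↔ fStar (E \ Qstar) (ridesOf S) = 0 :=
  isDirMultiwayCut_iff_isDirMulticut_ridesOf.trans isDirMulticut_iff_fStar_eq_zero

end Disruption

theorem stmt_3 {V : Type*} [Fintype V] [Nonempty V] [DecidableEq V]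
    (E : Finset (V × V)) (S : Finset V) (hS : 2 ≤ S.card)
    (Qstar : Finset (V × V)) (hQ : Qstar ⊆ E) :
    IsDirMultiwayCut E Qstar S ↔ fStar (E \ Qstar) (ridesOf S) = 0 :=
  stmt_3_general E S hS Qstar
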